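/- arXiv:1612.03372 — 2 statements merged into one kernel-verified Lean document; each statement's English description precedes it below -/
import Mathlib

section
/- Let n ≥ 3 and 1 ≤ k < n/2, let L be the Laplacian matrix of the generalized Petersen graph GP(n,k), viewed as a ℤ-linear map ℤ^{2n} → ℤ^{2n}, and let 𝒜 be the (2k+2)×(2k+2) companion matrix of the polynomial Q_k. Then the torsion subgroup of coker L (i.e., the Jacobian group Jac(GP(n,k))) is isomorphic to the torsion subgroup of coker(𝒜^n − I). -/
open Polynomial

def gpRel (n k : ℕ) : (ZMod n ⊕ ZMod n) → (ZMod n ⊕ ZMod n) → Prop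
  | Sum.inl i, Sum.inl j => j = i + 1
  | Sum.inl i, Sum.inr j => j = i
  | Sum.inr _, Sum.inl _ => False
  | Sum.inr i, Sum.inr j => j = i + (k : ZMod n)

instance (n k : ℕ) : DecidableRel (gpRel n k) := fun a b =>
  match a, b with
  | Sum.inl i, Sum.inl j => inferInstanceAs (Decidable (j = i + 1))
  | Sum.inl i, Sum.inr j => inferInstanceAs (Decidable (j = i))
  | Sum.inr _, Sum.inl _ => inferInstanceAs (Decidable False)
  | Sum.inr i, Sum.inr j => inferInstanceAs (Decidable (j = i + (k : ZMod n)))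

/-- The generalized Petersen graph `GP(n,k)`; `Sum.inl i` is the outer vertex `u_i`,
`Sum.inr i` the inner vertex `v_i`, and the edges are `u_i u_{i+1}`, `u_i v_i`,
`v_i v_{i+k}` (indices mod `n`). -/
def genPetersen (n k : ℕ) : SimpleGraph (ZMod n ⊕ ZMod n) :=
  SimpleGraph.fromRel (gpRel n k)

instance (n k : ℕ) : DecidableRel (genPetersen n k).Adj := fun a b =>
  inferInstanceAs (Decidable (a ≠ b ∧ (gpRel n k a b ∨ gpRel n k b a)))

/-- The monic integer polynomial `Q_k(z) = z^{k+1}·((3 − z − z⁻¹)(3 − z^k − z^{−k}) − 1)`,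
written out as
`Q_k(z) = 1 − 3z + z² − 3z^k + 8z^{k+1} − 3z^{k+2} + z^{2k} − 3z^{2k+1} + z^{2k+2}`. -/
noncomputable def gpCharPoly (k : ℕ) : Polynomial ℤ :=
  1 - 3 * X + X ^ 2 - 3 * X ^ k + 8 * X ^ (k + 1) - 3 * X ^ (k + 2)
    + X ^ (2 * k) - 3 * X ^ (2 * k + 1) + X ^ (2 * k + 2)

/-- The `(2k+2) × (2k+2)` companion matrix `𝒜` of `Q_k`: the first `2k+1` rows form
the block `(0 | I_{2k+1})` and the last row is `(−1, −a_1, …, −a_{2k+1})`, where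
`Q_k(z) = 1 + a_1 z + ⋯ + a_{2k+1} z^{2k+1} + z^{2k+2}`. -/
noncomputable def gpCompanion (k : ℕ) : Matrix (Fin (2 * k + 2)) (Fin (2 * k + 2)) ℤ :=
  fun i j =>
    if (i : ℕ) = 2 * k + 1 then -(gpCharPoly k).coeff (j : ℕ)
    else if (j : ℕ) = (i : ℕ) + 1 then 1 else 0

theorem cyc_aux {M : Type*} [AddCommGroup M] (F : Module.End ℤ M) (e : M) (q : ℤ[X])
    (T : M →ₗ[ℤ] ℤ[X]) (h1 : ∀ v, q ∣ T (F v) - X * T v) (h2 : q ∣ T e - 1) (p : ℤ[X]) :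
    q ∣ T (aeval F p e) - p := by
  have key : ∀ m : ℕ, q ∣ T ((F ^ m) e) - X ^ m := by
    intro m
    induction m with
    | zero => simpa using h2
    | succ m ih =>
      have := dvd_add (h1 ((F ^ m) e)) (Dvd.dvd.mul_left ih X)
      rw [pow_succ' F, Module.End.mul_apply]
      convert this using 1
      ring
  induction p using Polynomial.induction_on' with
  | add p r hp hr =>
    have := dvd_add hp hr
    simp only [map_add, LinearMap.add_apply]
    convert this using 1
    ring
  | monomial m a =>
    have := Dvd.dvd.mul_left (key m) (C a)
    rw [aeval_monomial, Module.End.mul_apply, Module.algebraMap_end_apply, map_smul,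
      ← C_mul_X_pow_eq_monomial, smul_eq_C_mul]
    convert this using 1
    ring

theorem quot_aux {C : Type*} {D : Type*} [AddCommGroup C] [AddCommGroup D]
    (f : ℤ[X] →+ C) (g : ℤ[X] →+ D) (hf : Function.Surjective f) (hg : Function.Surjective g)
    (h : ∀ p, f p = 0 ↔ g p = 0) : Nonempty (C ≃+ D) := by
  have hk : f.ker = g.ker := by
    ext p
    exact h p
  exact ⟨(QuotientAddGroup.quotientKerEquivOfSurjective f hf).symm.trans
    ((QuotientAddGroup.quotientAddEquivOfEq hk).trans
      (QuotientAddGroup.quotientKerEquivOfSurjective g hg))⟩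

theorem torsion_aux {C : Type*} {D : Type*} [AddCommGroup C] [AddCommGroup D]
    (h : Nonempty (C ≃+ D)) :
    Nonempty (AddCommGroup.torsion C ≃+ AddCommGroup.torsion D) := by
  obtain ⟨e⟩ := h
  refine ⟨(e.addSubgroupMap (AddCommGroup.torsion C)).trans (AddEquiv.addSubgroupCongr ?_)⟩
  ext x
  simp only [AddSubgroup.mem_map]
  constructor
  · rintro ⟨y, hy, rfl⟩
    exact e.toAddMonoidHom.isOfFinAddOrder hy
  · intro hx
    exact ⟨e.symm x, e.symm.toAddMonoidHom.isOfFinAddOrder hx, by simp⟩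

/-! ### The companion side -/

noncomputable def beta (k j : ℕ) : ℤ[X] := divX^[j] (gpCharPoly k)

theorem beta_coeff (k j i : ℕ) : (beta k j).coeff i = (gpCharPoly k).coeff (i + j) := by
  unfold beta
  induction j generalizing i with
  | zero => rfl
  | succ j ih =>
    rw [Function.iterate_succ_apply', coeff_divX, ih]
    congr 1
    omega

theorem beta_succ (k j : ℕ) :
    X * beta k (j + 1) = beta k j - C ((gpCharPoly k).coeff j) := by
  have h := X_mul_divX_add (beta k j)
  rw [beta_coeff, zero_add] at h
  have h2 : beta k (j + 1) = divX (beta k j) := by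
    unfold beta
    rw [Function.iterate_succ_apply']
  rw [h2]
  linear_combination h

theorem beta_top (k : ℕ) (hk : 1 ≤ k) : beta k (2 * k + 2) = 1 := by
  ext i
  rw [beta_coeff]
  have h3 : (3 : ℤ[X]) = C 3 := rfl
  have h8 : (8 : ℤ[X]) = C 8 := rfl
  unfold gpCharPoly
  simp only [h3, h8, coeff_add, coeff_sub, coeff_C_mul, coeff_X_pow, coeff_X, coeff_one]
  rw [if_neg (by omega), if_neg (by omega), if_neg (by omega), if_neg (by omega),
    if_neg (by omega), if_neg (by omega), if_neg (by omega), if_neg (by omega)]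
  by_cases hi : i = 0
  · simp [hi]
  · simp [hi]

theorem beta_top' (k : ℕ) (hk : 1 ≤ k) : beta k (2 * k + 1 + 1) = 1 := beta_top k hk

noncomputable def compT (k : ℕ) : (Fin (2 * k + 2) → ℤ) →ₗ[ℤ] ℤ[X] :=
  Fintype.linearCombination ℤ (fun j : Fin (2 * k + 2) => beta k (j + 1))

theorem compT_apply (k : ℕ) (v : Fin (2 * k + 2) → ℤ) :
    compT k v = ∑ j : Fin (2 * k + 2), C (v j) * beta k (j + 1) := by
  simp [compT, Fintype.linearCombination_apply, smul_eq_C_mul]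

theorem comp_mulVec_castSucc (k : ℕ) (v : Fin (2 * k + 2) → ℤ) (i : Fin (2 * k + 1)) :
    (gpCompanion k).mulVec v i.castSucc = v i.succ := by
  unfold Matrix.mulVec dotProduct
  rw [Finset.sum_eq_single i.succ]
  · have : (i : ℕ) ≠ 2 * k + 1 := by omega
    simp [gpCompanion, this]
  · intro j _ hj
    have : (i : ℕ) ≠ 2 * k + 1 := by omega
    have h2 : (j : ℕ) ≠ i + 1 := fun h => hj (Fin.ext (by simpa using h))
    simp [gpCompanion, this, h2]
  · simp

theorem comp_mulVec_last (k : ℕ) (v : Fin (2 * k + 2) → ℤ) :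
    (gpCompanion k).mulVec v (Fin.last (2 * k + 1)) =
      -∑ j : Fin (2 * k + 2), (gpCharPoly k).coeff j * v j := by
  unfold Matrix.mulVec dotProduct
  simp [gpCompanion]

theorem compT_comp (k : ℕ) (hk : 1 ≤ k) (v : Fin (2 * k + 2) → ℤ) :
    gpCharPoly k ∣ compT k ((gpCompanion k).mulVecLin v) - X * compT k v := by
  refine ⟨-C (v 0), ?_⟩
  have e1 : compT k ((gpCompanion k).mulVecLin v) =
      ∑ i : Fin (2 * k + 1), C (v i.succ) * beta k (i + 1)
       - ∑ j : Fin (2 * k + 2), C ((gpCharPoly k).coeff j) * C (v j) := by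
    rw [compT_apply, Fin.sum_univ_castSucc]
    simp only [Matrix.mulVecLin_apply, comp_mulVec_castSucc, comp_mulVec_last,
      Fin.val_castSucc, Fin.val_last]
    rw [beta_top' k hk]
    simp [map_sum, sub_eq_add_neg]
  have e2 : X * compT k v = ∑ j : Fin (2 * k + 2), C (v j) * beta k j
       - ∑ j : Fin (2 * k + 2), C ((gpCharPoly k).coeff j) * C (v j) := by
    rw [compT_apply, Finset.mul_sum, ← Finset.sum_sub_distrib]
    refine Finset.sum_congr rfl fun j _ => ?_
    have := beta_succ k j
    linear_combination C (v j) * this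
  have e3 : beta k 0 = gpCharPoly k := rfl
  rw [e1, e2, Fin.sum_univ_succ (fun j : Fin (2 * k + 2) => C (v j) * beta k j)]
  simp only [Fin.val_zero, Fin.val_succ, e3]
  ring

theorem comp_single_succ (k : ℕ) (j : Fin (2 * k + 1)) :
    (gpCompanion k).mulVecLin (Pi.single j.succ 1) =
      Pi.single j.castSucc 1 - (gpCharPoly k).coeff (j + 1) •
        Pi.single (Fin.last (2 * k + 1)) 1 := by
  ext i
  rw [Matrix.mulVecLin_apply]
  induction i using Fin.lastCases with
  | last =>
    rw [comp_mulVec_last, Finset.sum_eq_single j.succ]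
    · have : Fin.last (2 * k + 1) ≠ j.castSucc := (Fin.castSucc_lt_last j).ne'
      simp [Pi.single_apply, this]
    · intro b _ hb
      simp [Pi.single_apply, hb]
    · simp
  | cast i =>
    rw [comp_mulVec_castSucc]
    have : i.castSucc ≠ Fin.last (2 * k + 1) := (Fin.castSucc_lt_last i).ne
    simp [Pi.single_apply, this]

theorem comp_single_zero (k : ℕ) :
    (gpCompanion k).mulVecLin (Pi.single 0 1) =
      - (gpCharPoly k).coeff 0 • Pi.single (Fin.last (2 * k + 1)) 1 := by
  ext i
  rw [Matrix.mulVecLin_apply]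
  induction i using Fin.lastCases with
  | last =>
    rw [comp_mulVec_last, Finset.sum_eq_single 0]
    · simp
    · intro b _ hb
      simp [Pi.single_apply, hb]
    · simp
  | cast i =>
    rw [comp_mulVec_castSucc]
    have : i.castSucc ≠ Fin.last (2 * k + 1) := (Fin.castSucc_lt_last i).ne
    simp [Pi.single_apply, this]

theorem compG_step (k : ℕ) (j : ℕ) (e : Fin (2 * k + 2) → ℤ) :
    aeval (R := ℤ) (gpCompanion k).mulVecLin (beta k j) e =
      (gpCompanion k).mulVecLin (aeval (R := ℤ) (gpCompanion k).mulVecLin (beta k (j + 1)) e)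
        + (gpCharPoly k).coeff j • e := by
  have h : beta k j = X * beta k (j + 1) + C ((gpCharPoly k).coeff j) := by
    rw [beta_succ]; ring
  rw [h, map_add, map_mul, aeval_X, aeval_C, LinearMap.add_apply, Module.End.mul_apply,
    Module.algebraMap_end_apply]

theorem compG_beta (k : ℕ) (hk : 1 ≤ k) (j : Fin (2 * k + 2)) :
    aeval (R := ℤ) (gpCompanion k).mulVecLin (beta k (j + 1))
      (Pi.single (Fin.last (2 * k + 1)) 1) = Pi.single j 1 := by
  induction j using Fin.reverseInduction with
  | last =>
    rw [Fin.val_last, beta_top' k hk]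
    simp
  | cast i ih =>
    rw [compG_step]
    rw [Fin.val_succ] at ih
    rw [Fin.val_castSucc, ih, comp_single_succ]
    simp

theorem compG_char (k : ℕ) (hk : 1 ≤ k) :
    aeval (R := ℤ) (gpCompanion k).mulVecLin (gpCharPoly k)
      (Pi.single (Fin.last (2 * k + 1)) 1) = 0 := by
  have h0 := compG_beta k hk 0
  rw [Fin.val_zero] at h0
  have := compG_step k 0 (Pi.single (Fin.last (2 * k + 1)) 1)
  rw [h0, comp_single_zero] at this
  change aeval (R := ℤ) (gpCompanion k).mulVecLin (beta k 0) _ = 0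
  rw [this]
  simp

theorem compG_T (k : ℕ) (hk : 1 ≤ k) (v : Fin (2 * k + 2) → ℤ) :
    aeval (R := ℤ) (gpCompanion k).mulVecLin (compT k v)
      (Pi.single (Fin.last (2 * k + 1)) 1) = v := by
  rw [compT_apply, map_sum, LinearMap.sum_apply]
  simp only [map_mul, aeval_C, Module.End.mul_apply, Module.algebraMap_end_apply,
    compG_beta k hk]
  ext i
  simp [Finset.sum_apply, Pi.single_apply]

theorem compT_e (k : ℕ) (hk : 1 ≤ k) :
    compT k (Pi.single (Fin.last (2 * k + 1)) 1) = 1 := by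
  rw [compT_apply, Finset.sum_eq_single (Fin.last (2 * k + 1))]
  · rw [Fin.val_last, beta_top' k hk]
    simp
  · intro b _ hb
    simp [Pi.single_apply, hb]
  · simp

theorem mulVecLin_pow_sub (k n : ℕ) :
    (gpCompanion k ^ n - 1).mulVecLin =
      aeval (R := ℤ) (gpCompanion k).mulVecLin (X ^ n - 1 : ℤ[X]) := by
  rw [map_sub, map_pow, aeval_X, map_one]
  have h := map_sub (Matrix.toLin' (R := ℤ) (n := Fin (2 * k + 2)) (m := Fin (2 * k + 2)))
    (gpCompanion k ^ n) 1
  rw [Matrix.toLin'_pow, Matrix.toLin'_one] at h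
  exact h

theorem comp_side (k n : ℕ) (hk : 1 ≤ k) :
    ∃ f : ℤ[X] →+ ((Fin (2 * k + 2) → ℤ) ⧸
          LinearMap.range (Matrix.mulVecLin (gpCompanion k ^ n - 1))),
      Function.Surjective f ∧
      ∀ p, f p = 0 ↔ ∃ a b : ℤ[X], p = a * gpCharPoly k + b * (X ^ n - 1) := by
  set F : Module.End ℤ (Fin (2 * k + 2) → ℤ) := (gpCompanion k).mulVecLin with hF
  set e : Fin (2 * k + 2) → ℤ := Pi.single (Fin.last (2 * k + 1)) 1 with he
  let f : ℤ[X] →ₗ[ℤ] ((Fin (2 * k + 2) → ℤ) ⧸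
          LinearMap.range (Matrix.mulVecLin (gpCompanion k ^ n - 1))) :=
    (Submodule.mkQ _).comp ((LinearMap.applyₗ e).comp (aeval (R := ℤ) F).toLinearMap)
  have hf : ∀ p, f p = Submodule.Quotient.mk (aeval (R := ℤ) F p e) := fun p => rfl
  refine ⟨f.toAddMonoidHom, ?_, ?_⟩
  · intro x
    obtain ⟨v, rfl⟩ := Submodule.Quotient.mk_surjective _ x
    refine ⟨compT k v, ?_⟩
    change f _ = _
    rw [hf, compG_T k hk]
  · intro p
    change f p = 0 ↔ _
    rw [hf, Submodule.Quotient.mk_eq_zero, mulVecLin_pow_sub]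
    constructor
    · rintro ⟨w, hw⟩
      rw [← compG_T k hk w, ← Module.End.mul_apply, ← map_mul] at hw
      have h0 : aeval (R := ℤ) F (p - (X ^ n - 1) * compT k w) e = 0 := by
        rw [map_sub, LinearMap.sub_apply, hw, sub_self]
      have := cyc_aux F e (gpCharPoly k) (compT k) (compT_comp k hk)
        (by rw [compT_e k hk]; simp) (p - (X ^ n - 1) * compT k w)
      rw [h0, map_zero, zero_sub, dvd_neg] at this
      obtain ⟨a, ha⟩ := this
      exact ⟨a, compT k w, by linear_combination ha⟩
    · rintro ⟨a, b, rfl⟩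
      refine ⟨aeval (R := ℤ) F b e, ?_⟩
      rw [map_add, map_mul, LinearMap.add_apply, Module.End.mul_apply, compG_char k hk,
        map_zero, zero_add, ← Module.End.mul_apply, ← map_mul, mul_comm b]

/-! ### The graph side -/

def shift (n : ℕ) : Module.End ℤ (ZMod n → ℤ) where
  toFun w := fun i => w (i - 1)
  map_add' _ _ := rfl
  map_smul' _ _ := rfl

theorem shift_pow (n m : ℕ) (w : ZMod n → ℤ) (i : ZMod n) :
    (shift n ^ m) w i = w (i - m) := by
  induction m generalizing i with
  | zero => simp
  | succ m ih =>
    rw [pow_succ', Module.End.mul_apply]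
    change (shift n ^ m) w (i - 1) = _
    rw [ih]
    congr 1
    push_cast
    ring

theorem shift_pow_single (n m : ℕ) :
    (shift n ^ m) (Pi.single 0 1) = Pi.single (m : ZMod n) 1 := by
  ext i
  rw [shift_pow]
  simp [Pi.single_apply, sub_eq_zero]

noncomputable def cycT (n : ℕ) [NeZero n] : (ZMod n → ℤ) →ₗ[ℤ] ℤ[X] :=
  Fintype.linearCombination ℤ (fun j : ZMod n => (X : ℤ[X]) ^ j.val)

theorem cycT_apply (n : ℕ) [NeZero n] (v : ZMod n → ℤ) :
    cycT n v = ∑ j : ZMod n, C (v j) * X ^ j.val := by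
  simp [cycT, Fintype.linearCombination_apply, smul_eq_C_mul]

theorem X_pow_mod (n m : ℕ) : (X ^ n - 1 : ℤ[X]) ∣ X ^ (m % n) - X ^ m := by
  have h : (X ^ n - 1 : ℤ[X]) ∣ (X ^ n) ^ (m / n) - 1 := sub_one_dvd_pow_sub_one _ _
  have h2 := (Dvd.dvd.mul_left h (X ^ (m % n))).neg_right
  convert h2 using 1
  conv_lhs => rw [← Nat.mod_add_div m n]
  rw [Nat.add_mul_mod_self_left, Nat.mod_mod, pow_add, pow_mul]
  ring

theorem cycT_shift (n : ℕ) [NeZero n] (v : ZMod n → ℤ) :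
    (X ^ n - 1 : ℤ[X]) ∣ cycT n (shift n v) - X * cycT n v := by
  have e1 : cycT n (shift n v) = ∑ j : ZMod n, C (v j) * X ^ (j + 1).val := by
    rw [cycT_apply, ← Equiv.sum_comp (Equiv.addRight (1 : ZMod n))]
    refine Finset.sum_congr rfl fun j _ => ?_
    simp [shift]
  rw [e1, cycT_apply, Finset.mul_sum, ← Finset.sum_sub_distrib]
  refine Finset.dvd_sum fun j _ => ?_
  have h : (j + 1).val = (j.val + 1) % n := by
    rw [ZMod.val_add, ZMod.val_one_eq_one_mod, Nat.add_mod_mod]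
  rw [h]
  have := Dvd.dvd.mul_left (X_pow_mod n (j.val + 1)) (C (v j))
  convert this using 1
  ring

theorem cycG_T (n : ℕ) [NeZero n] (v : ZMod n → ℤ) :
    aeval (R := ℤ) (shift n) (cycT n v) (Pi.single 0 1) = v := by
  rw [cycT_apply, map_sum, LinearMap.sum_apply]
  simp only [map_mul, map_pow, aeval_X, aeval_C, Module.End.mul_apply,
    Module.algebraMap_end_apply, shift_pow_single, ZMod.natCast_zmod_val]
  ext i
  simp [Finset.sum_apply, Pi.single_apply]

theorem cyc_ker (n : ℕ) [NeZero n] (p : ℤ[X])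
    (hp : aeval (R := ℤ) (shift n) p (Pi.single 0 1) = 0) : (X ^ n - 1 : ℤ[X]) ∣ p := by
  have := cyc_aux (shift n) (Pi.single 0 1) (X ^ n - 1) (cycT n) (cycT_shift n) (by
    rw [cycT_apply, Finset.sum_eq_single 0]
    · simp
    · intro b _ hb
      simp [Pi.single_apply, hb]
    · simp) p
  rwa [hp, map_zero, zero_sub, dvd_neg] at this

theorem aeval_shift_one (n : ℕ) (w : ZMod n → ℤ) :
    aeval (R := ℤ) (shift n) (X ^ n - 1 : ℤ[X]) w = 0 := by
  ext i
  simp [shift_pow]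

theorem aeval_shift_char (n k : ℕ) (w : ZMod n → ℤ) (i : ZMod n) :
    aeval (R := ℤ) (shift n) (gpCharPoly k) w (i + (k + 1)) =
      9 * w i - 3 * w (i + 1) - 3 * w (i - 1) - 3 * w (i + k) - 3 * w (i - k)
      + w (i + 1 + k) + w (i + 1 - k) + w (i - 1 + k) + w (i - 1 - k) - w i := by
  have h3 : (3 : ℤ[X]) = C 3 := rfl
  have h8 : (8 : ℤ[X]) = C 8 := rfl
  have hX : (X : ℤ[X]) = X ^ 1 := (pow_one X).symm
  unfold gpCharPoly
  rw [h3, h8]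
  nth_rewrite 1 [hX]
  simp only [map_add, map_sub, map_mul, map_pow, map_one, aeval_X, aeval_C,
    LinearMap.add_apply, LinearMap.sub_apply, Module.End.mul_apply, Module.algebraMap_end_apply,
    Module.End.one_apply, Pi.add_apply, Pi.sub_apply, Pi.smul_apply, shift_pow, smul_eq_mul]
  push_cast
  rw [show i + ((k : ZMod n) + 1) - 1 = i + k by ring,
    show i + ((k : ZMod n) + 1) - 2 = i - 1 + k by ring,
    show i + ((k : ZMod n) + 1) - k = i + 1 by ring,
    show i + ((k : ZMod n) + 1) - (k + 1) = i by ring,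
    show i + ((k : ZMod n) + 1) - (k + 2) = i - 1 by ring,
    show i + ((k : ZMod n) + 1) - 2 * k = i + 1 - k by ring,
    show i + ((k : ZMod n) + 1) - (2 * k + 1) = i - k by ring,
    show i + ((k : ZMod n) + 1) - (2 * k + 2) = i - 1 - k by ring,
    show i + ((k : ZMod n) + 1) = i + 1 + k by ring]
  ring

theorem natCast_ne_zero_aux (n m : ℕ) (h0 : 0 < m) (h1 : m < n) : (m : ZMod n) ≠ 0 := by
  intro h
  rw [ZMod.natCast_eq_zero_iff] at h
  exact absurd (Nat.le_of_dvd h0 h) (by omega)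

theorem lap_inl (n k : ℕ) [NeZero n] (hn : 3 ≤ n) (x : ZMod n ⊕ ZMod n → ℤ) (i : ZMod n) :
    ((genPetersen n k).lapMatrix ℤ).mulVec x (Sum.inl i) =
      3 * x (Sum.inl i) - x (Sum.inl (i + 1)) - x (Sum.inl (i - 1)) - x (Sum.inr i) := by
  have h1 : (1 : ZMod n) ≠ 0 := by
    simpa using natCast_ne_zero_aux n 1 (by omega) (by omega)
  have h2 : (2 : ZMod n) ≠ 0 := by
    simpa using natCast_ne_zero_aux n 2 (by omega) (by omega)
  have hne : i + 1 ≠ i - 1 := fun h => h2 (by linear_combination h)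
  have hN : (genPetersen n k).neighborFinset (Sum.inl i) =
      {Sum.inl (i + 1), Sum.inl (i - 1), Sum.inr i} := by
    ext v
    rw [SimpleGraph.mem_neighborFinset]
    rcases v with j | j
    · simp only [genPetersen, SimpleGraph.fromRel_adj, gpRel, Finset.mem_insert,
        Finset.mem_singleton, Sum.inl.injEq, ne_eq, reduceCtorEq, or_false]
      constructor
      · rintro ⟨_, h | h⟩
        · exact Or.inl h
        · right; rw [h]; ring
      · rintro (h | h)
        · exact ⟨fun h' => h1 (by rw [h] at h'; linear_combination -h'), Or.inl h⟩
        · exact ⟨fun h' => h1 (by rw [h] at h'; linear_combination h'), Or.inr (by rw [h]; ring)⟩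
    · simp [genPetersen, SimpleGraph.fromRel_adj, gpRel]
  rw [SimpleGraph.lapMatrix_mulVec_apply, ← SimpleGraph.card_neighborFinset_eq_degree, hN,
    Finset.sum_insert (by simp [hne]), Finset.sum_insert (by simp), Finset.sum_singleton,
    Finset.card_insert_of_notMem (by simp [hne]), Finset.card_insert_of_notMem (by simp),
    Finset.card_singleton]
  push_cast
  ring

theorem lap_inr (n k : ℕ) [NeZero n] (hk : 1 ≤ k) (hkn : 2 * k < n)
    (x : ZMod n ⊕ ZMod n → ℤ) (i : ZMod n) :
    ((genPetersen n k).lapMatrix ℤ).mulVec x (Sum.inr i) =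
      3 * x (Sum.inr i) - x (Sum.inr (i + k)) - x (Sum.inr (i - k)) - x (Sum.inl i) := by
  have h1 : (k : ZMod n) ≠ 0 := natCast_ne_zero_aux n k (by omega) (by omega)
  have h2 : (2 * k : ZMod n) ≠ 0 := by
    have := natCast_ne_zero_aux n (2 * k) (by omega) (by omega)
    push_cast at this
    exact this
  have hne : i + k ≠ i - k := fun h => h2 (by linear_combination h)
  have hN : (genPetersen n k).neighborFinset (Sum.inr i) =
      {Sum.inr (i + k), Sum.inr (i - k), Sum.inl i} := by
    ext v
    rw [SimpleGraph.mem_neighborFinset]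
    rcases v with j | j
    · simp [genPetersen, SimpleGraph.fromRel_adj, gpRel, eq_comm]
    · simp only [genPetersen, SimpleGraph.fromRel_adj, gpRel, Finset.mem_insert,
        Finset.mem_singleton, Sum.inr.injEq, ne_eq, reduceCtorEq, or_false]
      constructor
      · rintro ⟨_, h | h⟩
        · exact Or.inl h
        · right; rw [h]; ring
      · rintro (h | h)
        · exact ⟨fun h' => h1 (by rw [h] at h'; linear_combination -h'), Or.inl h⟩
        · exact ⟨fun h' => h1 (by rw [h] at h'; linear_combination h'), Or.inr (by rw [h]; ring)⟩
  rw [SimpleGraph.lapMatrix_mulVec_apply, ← SimpleGraph.card_neighborFinset_eq_degree, hN,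
    Finset.sum_insert (by simp [hne]), Finset.sum_insert (by simp), Finset.sum_singleton,
    Finset.card_insert_of_notMem (by simp [hne]), Finset.card_insert_of_notMem (by simp),
    Finset.card_singleton]
  push_cast
  ring

def inlMap (n : ℕ) : (ZMod n → ℤ) →ₗ[ℤ] (ZMod n ⊕ ZMod n → ℤ) where
  toFun w := Sum.elim w 0
  map_add' a b := by
    ext i
    rcases i with i | i <;> simp
  map_smul' a b := by
    ext i
    rcases i with i | i <;> simp

theorem graph_side (n k : ℕ) [NeZero n] (hn : 3 ≤ n) (hk : 1 ≤ k) (hkn : 2 * k < n) :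
    ∃ f : ℤ[X] →+ ((ZMod n ⊕ ZMod n → ℤ) ⧸
          LinearMap.range (Matrix.mulVecLin ((genPetersen n k).lapMatrix ℤ))),
      Function.Surjective f ∧
      ∀ p, f p = 0 ↔ ∃ a b : ℤ[X], p = a * gpCharPoly k + b * (X ^ n - 1) := by
  let f : ℤ[X] →ₗ[ℤ] ((ZMod n ⊕ ZMod n → ℤ) ⧸
          LinearMap.range (Matrix.mulVecLin ((genPetersen n k).lapMatrix ℤ))) :=
    (Submodule.mkQ _).comp ((inlMap n).comp
      ((LinearMap.applyₗ (Pi.single 0 1)).comp (aeval (R := ℤ) (shift n)).toLinearMap))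
  have hf : ∀ p, f p = Submodule.Quotient.mk
    (Sum.elim (aeval (R := ℤ) (shift n) p (Pi.single 0 1)) 0) := fun p => rfl
  refine ⟨f.toAddMonoidHom, ?_, ?_⟩
  · intro x
    obtain ⟨v, rfl⟩ := Submodule.Quotient.mk_surjective _ x
    refine ⟨cycT n (fun i => v (Sum.inl i) + 3 * v (Sum.inr i) - v (Sum.inr (i + 1))
      - v (Sum.inr (i - 1))), ?_⟩
    change f _ = _
    rw [hf, cycG_T, Submodule.Quotient.eq]
    refine ⟨Sum.elim (fun i => v (Sum.inr i)) 0, ?_⟩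
    ext i
    rcases i with i | i
    · rw [Matrix.mulVecLin_apply, lap_inl n k hn]
      simp
      ring
    · rw [Matrix.mulVecLin_apply, lap_inr n k hk hkn]
      simp
  · intro p
    change f p = 0 ↔ _
    rw [hf, Submodule.Quotient.mk_eq_zero]
    constructor
    · rintro ⟨x, hx⟩
      have hL : ∀ i, aeval (R := ℤ) (shift n) p (Pi.single 0 1) i =
          3 * x (Sum.inl i) - x (Sum.inl (i + 1)) - x (Sum.inl (i - 1)) - x (Sum.inr i) := by
        intro i
        rw [← lap_inl n k hn, ← Matrix.mulVecLin_apply, hx]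
        rfl
      have hR : ∀ i, x (Sum.inl i) =
          3 * x (Sum.inr i) - x (Sum.inr (i + k)) - x (Sum.inr (i - k)) := by
        intro i
        have h := lap_inr n k hk hkn x i
        rw [← Matrix.mulVecLin_apply, hx] at h
        simp only [Sum.elim_inr, Pi.zero_apply] at h
        linarith
      set w : ZMod n → ℤ := fun i => x (Sum.inr (i + (k + 1))) with hw
      have key : aeval (R := ℤ) (shift n) (p - gpCharPoly k * cycT n w) (Pi.single 0 1) = 0 := by
        rw [map_sub, LinearMap.sub_apply, map_mul, Module.End.mul_apply, cycG_T]
        ext j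
        obtain ⟨i, rfl⟩ : ∃ i, j = i + (k + 1) := ⟨j - (k + 1), by ring⟩
        rw [Pi.sub_apply, aeval_shift_char, hL, hR, hR, hR, Pi.zero_apply]
        simp only [hw]
        ring_nf
      obtain ⟨b, hb⟩ := cyc_ker n _ key
      exact ⟨cycT n w, b, by linear_combination hb⟩
    · rintro ⟨a, b, rfl⟩
      set w := aeval (R := ℤ) (shift n) a (Pi.single 0 1) with hw
      have h1 : aeval (R := ℤ) (shift n) (a * gpCharPoly k + b * (X ^ n - 1)) (Pi.single 0 1)
          = aeval (R := ℤ) (shift n) (gpCharPoly k) w := by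
        rw [map_add, LinearMap.add_apply, mul_comm a, map_mul, Module.End.mul_apply, mul_comm b,
          map_mul (aeval (R := ℤ) (shift n)) (X ^ n - 1) b, Module.End.mul_apply,
          aeval_shift_one, add_zero]
      rw [h1]
      refine ⟨Sum.elim (fun i => 3 * w (i - (k + 1)) - w (i - 1) - w (i - (2 * k + 1)))
        (fun i => w (i - (k + 1))), ?_⟩
      ext j
      rcases j with j | j
      · obtain ⟨i, rfl⟩ : ∃ i, j = i + (k + 1) := ⟨j - (k + 1), by ring⟩
        rw [Matrix.mulVecLin_apply, lap_inl n k hn]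
        simp only [Sum.elim_inl, Sum.elim_inr]
        rw [aeval_shift_char]
        ring_nf
      · rw [Matrix.mulVecLin_apply, lap_inr n k hk hkn]
        simp only [Sum.elim_inl, Sum.elim_inr, Pi.zero_apply]
        ring_nf

theorem jacobian_iso (n k : ℕ) (hn : 3 ≤ n) (hk : 1 ≤ k) (hkn : 2 * k < n) :
    haveI : NeZero n := ⟨by omega⟩
    Nonempty (
      (AddCommGroup.torsion ((ZMod n ⊕ ZMod n → ℤ) ⧸
          LinearMap.range (Matrix.mulVecLin ((genPetersen n k).lapMatrix ℤ))))
        ≃+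
      (AddCommGroup.torsion ((Fin (2 * k + 2) → ℤ) ⧸
          LinearMap.range (Matrix.mulVecLin (gpCompanion k ^ n - 1))))) := by
  haveI : NeZero n := ⟨by omega⟩
  obtain ⟨f, hf, hf'⟩ := graph_side n k hn hk hkn
  obtain ⟨g, hg, hg'⟩ := comp_side k n hk
  exact torsion_aux (quot_aux f g hf hg fun p => (hf' p).trans (hg' p).symm)
end

section
/- Let n ≥ 5 be an integer and let α, β ∈ ℤ satisfy T_n((1 + √29)/4) − 1 = (α + β√29)/4 as an equality of real numbers. Then 20·τ(GP(n,2)) = (−1)^n · n · (α² − 29β²), as an equality of integers. -/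
open Polynomial

/-- The number of spanning trees of a graph `G`: the number of subgraphs that
contain all vertices and are trees. -/
noncomputable def numSpanningTrees {V : Type*} (G : SimpleGraph V) : ℕ :=
  Nat.card {H : G.Subgraph // H.IsSpanning ∧ H.coe.IsTree}

/-- `f` is a parent function of a spanning tree rooted at `r`. -/
def IsParentFn {V : Type*} (G : SimpleGraph V) (r : V) (f : V → V) : Prop :=
  f r = r ∧ (∀ v, v ≠ r → G.Adj v (f v)) ∧ ∀ v, ∃ k, f^[k] v = r

/-- The graph with edges `v -- f v`. -/
def parentGraph {V : Type*} (f : V → V) : SimpleGraph V :=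
  SimpleGraph.fromRel (fun a b => f a = b)

lemma parentGraph_le {V : Type*} {G : SimpleGraph V} {r : V} {f : V → V}
    (h : IsParentFn G r f) : parentGraph f ≤ G := by
  intro a b hab
  obtain ⟨hne, hab⟩ := hab
  have key : ∀ a b, a ≠ b → f a = b → G.Adj a b := by
    intro a b hne e
    by_cases har : a = r
    · subst har
      exact absurd (h.1.symm.trans e) hne
    · rw [← e]; exact h.2.1 a har
  rcases hab with e | e
  · exact key a b hne e
  · exact (key b a hne.symm e).symm

lemma parentGraph_connected {V : Type*} {r : V} {f : V → V}
    (h : ∀ v, ∃ k, f^[k] v = r) : (parentGraph f).Connected := by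
  have step : ∀ v, (parentGraph f).Reachable v (f v) := by
    intro v
    by_cases e : v = f v
    · rw [← e]
    · exact SimpleGraph.Adj.reachable ⟨e, Or.inl rfl⟩
  have it : ∀ k v, (parentGraph f).Reachable v (f^[k] v) := by
    intro k
    induction k with
    | zero => intro v; exact SimpleGraph.Reachable.refl v
    | succ k ih => intro v; rw [Function.iterate_succ_apply]; exact (step v).trans (ih (f v))
  have tor : ∀ v, (parentGraph f).Reachable v r := by
    intro v
    obtain ⟨k, hk⟩ := h v
    have := it k v
    rwa [hk] at this
  have : Nonempty V := ⟨r⟩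
  exact SimpleGraph.Connected.mk (fun u v => (tor u).trans (tor v).symm)

lemma parentGraph_isTree {V : Type*} [Finite V] {G : SimpleGraph V} {r : V} {f : V → V}
    (h : IsParentFn G r f) : (parentGraph f).IsTree := by
  classical
  have := Fintype.ofFinite V
  have hc := parentGraph_connected h.2.2
  rw [SimpleGraph.isTree_iff_connected_and_card]
  refine ⟨hc, le_antisymm ?_ hc.card_vert_le_card_edgeSet_add_one⟩
  have hsub : (parentGraph f).edgeSet ⊆
      (((Finset.univ.erase r).image fun v => s(v, f v) : Finset (Sym2 V)) : Set (Sym2 V)) := by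
    intro e
    induction e using Sym2.ind with
    | _ a b =>
      intro hab
      have hab : a ≠ b ∧ (f a = b ∨ f b = a) := hab
      obtain ⟨hne, hab⟩ := hab
      simp only [Finset.coe_image, Set.mem_image, Finset.mem_coe, Finset.mem_erase,
        Finset.mem_univ, and_true]
      rcases hab with e | e
      · refine ⟨a, ?_, by rw [e]⟩
        rintro rfl
        exact hne (h.1.symm.trans e)
      · refine ⟨b, ?_, by rw [e, Sym2.eq_swap]⟩
        rintro rfl
        exact hne (h.1.symm.trans e).symm
  have h1 := Nat.card_mono (Finset.finite_toSet _) hsub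
  have h2 : ((Finset.univ.erase r).image fun v => s(v, f v)).card ≤ Fintype.card V - 1 := by
    refine Finset.card_image_le.trans ?_
    rw [Finset.card_erase_of_mem (Finset.mem_univ _), Finset.card_univ]
  have h3 : 0 < Fintype.card V := Fintype.card_pos_iff.mpr ⟨r⟩
  simp only [SetLike.coe_sort_coe, Nat.card_eq_fintype_card, Fintype.card_coe] at h1
  rw [← Nat.card_eq_fintype_card] at h1
  rw [Nat.card_eq_fintype_card (α := V)]
  omega

lemma parentGraph_inj {V : Type*} {G : SimpleGraph V} {r : V} {f g : V → V}
    (hf : IsParentFn G r f) (hg : IsParentFn G r g) (h : parentGraph f = parentGraph g) :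
    f = g := by
  have step : ∀ v, f v ≠ g v → f (f v) ≠ g (f v) := by
    intro v hv hw
    have hvr : v ≠ r := by
      rintro rfl
      exact hv (hf.1.trans hg.1.symm)
    have hne : v ≠ f v := (hf.2.1 v hvr).ne
    have hadj : (parentGraph f).Adj v (f v) := ⟨hne, Or.inl rfl⟩
    rw [h] at hadj
    obtain ⟨_, e | e⟩ := hadj
    · exact hv e.symm
    · have e2 : f (f v) = v := hw.trans e
      have hfv : f v ≠ r := by
        intro e3
        rw [e3, hf.1] at e2
        exact hvr e2.symm
      have : ∀ k, f^[k] v ≠ r ∧ f^[k] (f v) ≠ r := by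
        intro k
        induction k with
        | zero => exact ⟨hvr, hfv⟩
        | succ k ih =>
          rw [Function.iterate_succ_apply, Function.iterate_succ_apply, e2]
          exact ⟨ih.2, ih.1⟩
      obtain ⟨k, hk⟩ := hf.2.2 v
      exact (this k).1 hk
  funext v
  by_contra hv
  have : ∀ k, ∀ v, f v ≠ g v → f (f^[k] v) ≠ g (f^[k] v) := by
    intro k
    induction k with
    | zero => intro v hv; exact hv
    | succ k ih => intro v hv; rw [Function.iterate_succ_apply]; exact ih _ (step v hv)
  obtain ⟨k, hk⟩ := hf.2.2 v
  have h3 := this k v hv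
  rw [hk] at h3
  exact h3 (hf.1.trans hg.1.symm)

lemma exists_parentFn {V : Type*} [Finite V] {G T : SimpleGraph V} (r : V)
    (hle : T ≤ G) (hT : T.IsTree) : ∃ f, IsParentFn G r f ∧ parentGraph f = T := by
  classical
  have hc := hT.connected
  have ex : ∀ v, v ≠ r → ∃ w, T.Adj v w ∧ T.dist w r < T.dist v r := by
    intro v hv
    obtain ⟨p, hp⟩ := (hc.preconnected v r).exists_walk_length_eq_dist
    cases p with
    | nil => exact absurd rfl hv
    | cons hadj q =>
      refine ⟨_, hadj, ?_⟩
      rw [← hp, SimpleGraph.Walk.length_cons]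
      exact Nat.lt_succ_of_le (SimpleGraph.dist_le q)
  choose! f0 hf0 using ex
  let f : V → V := fun v => if v = r then r else f0 v
  have hfr : f r = r := if_pos rfl
  have hfn : ∀ v, v ≠ r → f v = f0 v := fun v hv => if_neg hv
  have hreach : ∀ d v, T.dist v r ≤ d → ∃ k, f^[k] v = r := by
    intro d
    induction d with
    | zero =>
      intro v hv
      refine ⟨0, ?_⟩
      exact hc.dist_eq_zero_iff.mp (Nat.le_zero.mp hv)
    | succ d ih =>
      intro v hv
      by_cases hvr : v = r
      · exact ⟨0, hvr⟩
      · obtain ⟨k, hk⟩ := ih (f v) (by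
          rw [hfn v hvr]
          have := (hf0 v hvr).2
          omega)
        exact ⟨k + 1, by rw [Function.iterate_succ_apply]; exact hk⟩
  have hpT : IsParentFn T r f :=
    ⟨hfr, fun v hv => by rw [hfn v hv]; exact (hf0 v hv).1, fun v => hreach _ v le_rfl⟩
  refine ⟨f, ⟨hpT.1, fun v hv => hle (hpT.2.1 v hv), hpT.2.2⟩, ?_⟩
  have hmin := SimpleGraph.isTree_iff_minimal_connected.mp hT
  exact le_antisymm (parentGraph_le hpT)
    (hmin.2 (parentGraph_connected hpT.2.2) (parentGraph_le hpT))

lemma numSpanningTrees_eq_card_parentFn {V : Type*} [Finite V] (G : SimpleGraph V) (r : V) :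
    numSpanningTrees G = Nat.card {f : V → V // IsParentFn G r f} := by
  unfold numSpanningTrees
  symm
  refine Nat.card_eq_of_bijective (fun f => ⟨SimpleGraph.toSubgraph (parentGraph f.1) (parentGraph_le f.2),
    ?_, ?_⟩) ⟨?_, ?_⟩
  · intro v; trivial
  · have hs : (SimpleGraph.toSubgraph (parentGraph f.1) (parentGraph_le f.2)).IsSpanning := fun v => trivial
    rw [← (SimpleGraph.Subgraph.spanningCoeEquivCoeOfSpanning _ hs).isTree_iff]
    exact parentGraph_isTree f.2
  · intro f g hfg
    apply Subtype.ext
    refine parentGraph_inj f.2 g.2 ?_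
    have h := congrArg (fun H => (H.1).spanningCoe) hfg
    exact h
  · rintro ⟨H, hs, ht⟩
    rw [← (SimpleGraph.Subgraph.spanningCoeEquivCoeOfSpanning _ hs).isTree_iff] at ht
    obtain ⟨f, hf, he⟩ := exists_parentFn r H.spanningCoe_le ht
    refine ⟨⟨f, hf⟩, ?_⟩
    apply Subtype.ext
    apply SimpleGraph.Subgraph.ext
    · ext v
      exact ⟨fun _ => hs v, fun _ => trivial⟩
    · show (parentGraph f).Adj = H.Adj
      rw [he]
      rfl

open scoped Classical in
/-- Row vectors of the rooted functional matrix. -/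
noncomputable def fnRow {V : Type*} (r v u : V) : V → ℂ :=
  if v = r then Pi.single r 1 else Pi.single v 1 - Pi.single u 1

open scoped Classical in
lemma det_fnRow_eq_one {V : Type*} [Fintype V] (r : V) (f : V → V)
    (h : ∀ v, ∃ k, f^[k] v = r) :
    Matrix.det (Matrix.of fun v => fnRow r v (f v)) = 1 := by
  let d : V → ℕ := fun v => Nat.find (h v)
  have hd : ∀ v, v ≠ r → d (f v) < d v := by
    intro v hv
    have h1 : f^[d v] v = r := Nat.find_spec (h v)
    have h0 : d v ≠ 0 := by
      intro e
      rw [e] at h1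
      exact hv h1
    obtain ⟨m, hm⟩ := Nat.exists_eq_succ_of_ne_zero h0
    rw [hm, Function.iterate_succ_apply] at h1
    have : d (f v) ≤ m := Nat.find_min' (h (f v)) h1
    omega
  have hbt : (Matrix.of fun v => fnRow r v (f v)).BlockTriangular
      (fun v => OrderDual.toDual (d v)) := by
    intro i j hij
    have hij : d i < d j := hij
    have hne : j ≠ i := by rintro rfl; exact lt_irrefl _ hij
    simp only [Matrix.of_apply, fnRow]
    split_ifs with hi
    · subst hi; simp [hne]
    · have : j ≠ f i := by
        rintro rfl
        have := hd i hi
        omega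
      simp [hne, this]
  rw [hbt.det]
  apply Finset.prod_eq_one
  intro a _
  have : (Matrix.of fun v => fnRow r v (f v)).toSquareBlock
      (fun v => OrderDual.toDual (d v)) a = 1 := by
    ext ⟨i, hi⟩ ⟨j, hj⟩
    have hij : d i = d j := by
      have := hi.trans hj.symm
      exact this
    simp only [Matrix.toSquareBlock_def, Matrix.of_apply, fnRow, Matrix.one_apply,
      Subtype.mk.injEq]
    split_ifs with h1 h2 h2
    · subst h1; subst h2; simp
    · subst h1; simp [Ne.symm h2]
    · subst h2
      have : i ≠ f i := by
        intro e
        have := hd i h1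
        rw [← e] at this
        omega
      simp [this]
    · have : j ≠ f i := by
        rintro rfl
        have := hd i h1
        omega
      simp [this, Ne.symm h2]
  rw [this, Matrix.det_one]

open scoped Classical in
lemma det_fnRow_eq_zero {V : Type*} [Fintype V] (r : V) (f : V → V)
    (h : ¬ ∀ v, ∃ k, f^[k] v = r) :
    Matrix.det (Matrix.of fun v => fnRow r v (f v)) = 0 := by
  push Not at h
  obtain ⟨v0, hv0⟩ := h
  apply Matrix.exists_mulVec_eq_zero_iff.mp
  refine ⟨fun v => if ∃ k, f^[k] v = r then 0 else 1, ?_, ?_⟩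
  · intro e
    have := congrFun e v0
    simp [hv0] at this
  · funext v
    have key : ∀ x : V → ℂ, Matrix.mulVec (Matrix.of fun v => fnRow r v (f v)) x v =
        if v = r then x r else x v - x (f v) := by
      intro x
      simp only [Matrix.mulVec, Matrix.of_apply, fnRow]
      split_ifs with hv
      · simp
      · show (Pi.single v 1 - Pi.single (f v) 1 : V → ℂ) ⬝ᵥ x = _
        simp [sub_dotProduct]
    rw [key]
    split_ifs with hv h1 h2 h3 h4
    · rfl
    · exact absurd ⟨0, rfl⟩ h1
    · simp
    · obtain ⟨k, hk⟩ := h2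
      cases k with
      | zero => exact absurd hk hv
      | succ k => exact absurd ⟨k, hk⟩ h3
    · obtain ⟨k, hk⟩ := h4
      exact absurd ⟨k + 1, hk⟩ h2
    · simp

open scoped Classical in
lemma matrix_tree {V : Type*} [Fintype V] (G : SimpleGraph V) (r : V) :
    ((G.lapMatrix ℂ).updateRow r (Pi.single r 1)).det = (numSpanningTrees G : ℂ) := by
  have hA : (G.lapMatrix ℂ).updateRow r (Pi.single r 1) =
      Matrix.of fun v => ∑ u ∈ (if v = r then {r} else G.neighborFinset v), fnRow r v u := by
    ext v w
    by_cases hv : v = r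
    · subst hv
      simp [fnRow]
    · simp only [Matrix.updateRow_ne hv, Matrix.of_apply, fnRow, if_neg hv]
      simp only [Finset.sum_sub_distrib, Finset.sum_const, SimpleGraph.lapMatrix,
        SimpleGraph.degMatrix, Matrix.sub_apply, Matrix.diagonal_apply,
        SimpleGraph.adjMatrix_apply, Pi.sub_apply, SimpleGraph.card_neighborFinset_eq_degree,
        Pi.smul_apply, Finset.sum_apply, Pi.single_apply]
      congr 1
      · simp [eq_comm]
      · simp
  have hB := MultilinearMap.map_sum_finset
    (Matrix.detRowAlternating (R := ℂ) (n := V)).toMultilinearMap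
    (fun v u => fnRow r v u) (fun v => if v = r then {r} else G.neighborFinset v)
  rw [hA]
  refine Eq.trans hB ?_
  have hC : ∀ f : V → V, (Matrix.detRowAlternating (R := ℂ) (n := V)).toMultilinearMap
      (fun v => fnRow r v (f v)) = if ∀ v, ∃ k, f^[k] v = r then 1 else 0 := by
    intro f
    split_ifs with h
    · exact det_fnRow_eq_one r f h
    · exact det_fnRow_eq_zero r f h
  simp only [hC]
  rw [Finset.sum_boole, numSpanningTrees_eq_card_parentFn G r, Nat.card_eq_fintype_card,
    Fintype.card_subtype]
  congr 2
  ext f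
  rw [Finset.mem_filter, Finset.mem_filter, Fintype.mem_piFinset]
  simp only [Finset.mem_univ, true_and, IsParentFn]
  constructor
  · rintro ⟨h1, h2⟩
    refine ⟨?_, ?_, h2⟩
    · simpa using h1 r
    · intro v hv
      simpa [hv] using h1 v
  · rintro ⟨h1, h2, h3⟩
    refine ⟨?_, h3⟩
    intro v
    by_cases hv : v = r
    · subst hv; simp [h1]
    · simpa [hv] using h2 v hv

lemma det_add_ones {V : Type*} [Fintype V] [DecidableEq V] (L : Matrix V V ℂ) (r : V)
    (hrow : ∀ i, ∑ j, L i j = 0) (hcol : ∀ j, ∑ i, L i j = 0) :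
    (L + Matrix.of fun _ _ => (1 : ℂ)).det =
      (Fintype.card V : ℂ) ^ 2 * (L.updateRow r (Pi.single r 1)).det := by
  set N : ℂ := (Fintype.card V : ℂ)
  set J : Matrix V V ℂ := Matrix.of fun _ _ => (1 : ℂ)
  have h1 : (L + J).det = N * ((L + J).updateRow r (fun _ => 1)).det := by
    have := Matrix.det_updateRow_sum (L + J) r (fun _ => 1)
    rw [one_smul] at this
    rw [← this, ← Matrix.det_updateRow_smul]
    congr 2
    funext j
    rw [Finset.sum_apply]
    simp [Finset.sum_add_distrib, hcol, J, N]
  have h2 : ((L + J).updateRow r (fun _ => 1)).det = (L.updateRow r (fun _ => 1)).det := by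
    apply Matrix.det_eq_of_forall_row_eq_smul_add_const (fun i => if i = r then 0 else 1) r
    · simp
    · intro i j
      by_cases hi : i = r
      · subst hi; simp
      · simp [Matrix.updateRow_ne hi, hi, J]
  set M := L.updateRow r (fun _ => (1 : ℂ)) with hM
  have h3 : M.det = N * (M.updateCol r (Pi.single r 1)).det := by
    have := Matrix.det_updateCol_sum M r (fun _ => 1)
    rw [one_smul] at this
    rw [← this, ← Matrix.det_updateCol_smul]
    congr 2
    funext i
    by_cases hi : i = r
    · subst hi; simp [hM, N]
    · simp [hM, Matrix.updateRow_ne hi, hi, hrow]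
  have h4 : (M.updateCol r (Pi.single r 1)).det = (L.updateRow r (Pi.single r 1)).det := by
    rw [← Matrix.cramer_apply, Matrix.cramer_eq_adjugate_mulVec, Matrix.mulVec_single_one,
      Matrix.col_apply, Matrix.adjugate_apply, hM, Matrix.updateRow_idem]
  rw [h1, h2, h3, h4]
  ring

lemma matrix_tree' {V : Type*} [Fintype V] [DecidableEq V] (G : SimpleGraph V)
    [DecidableRel G.Adj] (r : V) :
    ((G.lapMatrix ℂ).updateRow r (Pi.single r 1)).det = (numSpanningTrees G : ℂ) := by
  rw [← matrix_tree G r]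
  congr!

lemma gp_neighborFinset_inl {n : ℕ} [NeZero n] (hn : 5 ≤ n) (i : ZMod n)
    [Fintype ((genPetersen n 2).neighborSet (Sum.inl i))] :
    (genPetersen n 2).neighborFinset (Sum.inl i) =
      {Sum.inl (i + 1), Sum.inl (i - 1), Sum.inr i} := by
  have h1 : (1 : ZMod n) ≠ 0 := by
    have : Fact (1 < n) := ⟨by omega⟩
    exact one_ne_zero
  ext a
  rw [SimpleGraph.mem_neighborFinset]
  rcases a with j | j
  · simp only [genPetersen, SimpleGraph.fromRel_adj, gpRel, Finset.mem_insert,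
      Finset.mem_singleton, Sum.inl.injEq, reduceCtorEq, or_false, ne_eq]
    constructor
    · rintro ⟨-, h | h⟩
      · exact Or.inl h
      · right; rw [h]; ring
    · rintro (h | h)
      · exact ⟨by rw [h]; simpa using h1, Or.inl h⟩
      · refine ⟨?_, Or.inr (by rw [h]; ring)⟩
        rw [h]
        intro e
        apply h1
        linear_combination e
  · simp [genPetersen, SimpleGraph.fromRel_adj, gpRel]

lemma zmod_natCast_ne_zero {n m : ℕ} (h0 : 0 < m) (h : m < n) : (m : ZMod n) ≠ 0 := by
  rw [Ne, ZMod.natCast_eq_zero_iff]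
  exact Nat.not_dvd_of_pos_of_lt h0 h

lemma gp_neighborFinset_inr {n : ℕ} [NeZero n] (hn : 5 ≤ n) (i : ZMod n)
    [Fintype ((genPetersen n 2).neighborSet (Sum.inr i))] :
    (genPetersen n 2).neighborFinset (Sum.inr i) =
      {Sum.inr (i + 2), Sum.inr (i - 2), Sum.inl i} := by
  have h1 : (2 : ZMod n) ≠ 0 := by
    exact_mod_cast zmod_natCast_ne_zero (n := n) (m := 2) (by omega) (by omega)
  ext a
  rw [SimpleGraph.mem_neighborFinset]
  rcases a with j | j
  · simp [genPetersen, SimpleGraph.fromRel_adj, gpRel, eq_comm]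
  · simp only [genPetersen, SimpleGraph.fromRel_adj, gpRel, Finset.mem_insert,
      Finset.mem_singleton, Sum.inr.injEq, reduceCtorEq, or_false, ne_eq, Nat.cast_ofNat]
    constructor
    · rintro ⟨-, h | h⟩
      · exact Or.inl h
      · right; rw [h]; ring
    · rintro (h | h)
      · exact ⟨by rw [h]; simpa using h1, Or.inl h⟩
      · refine ⟨?_, Or.inr (by rw [h]; ring)⟩
        rw [h]
        intro e
        apply h1
        linear_combination e

open scoped Classical in
lemma gp_lap_inl {n : ℕ} [NeZero n] (hn : 5 ≤ n) (x : ZMod n ⊕ ZMod n → ℂ) (i : ZMod n) :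
    ((genPetersen n 2).lapMatrix ℂ).mulVec x (Sum.inl i) =
      3 * x (Sum.inl i) - (x (Sum.inl (i + 1)) + x (Sum.inl (i - 1)) + x (Sum.inr i)) := by
  have h2 : (2 : ZMod n) ≠ 0 := by
    exact_mod_cast zmod_natCast_ne_zero (n := n) (m := 2) (by omega) (by omega)
  have h : i + 1 ≠ i - 1 := by
    intro e
    apply h2
    linear_combination e
  rw [SimpleGraph.lapMatrix_mulVec_apply, ← SimpleGraph.card_neighborFinset_eq_degree,
    gp_neighborFinset_inl hn, Finset.sum_insert (by simp [h]), Finset.sum_insert (by simp),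
    Finset.sum_singleton, Finset.card_insert_of_notMem (by simp [h]),
    Finset.card_insert_of_notMem (by simp), Finset.card_singleton]
  push_cast
  ring

open scoped Classical in
lemma gp_lap_inr {n : ℕ} [NeZero n] (hn : 5 ≤ n) (x : ZMod n ⊕ ZMod n → ℂ) (i : ZMod n) :
    ((genPetersen n 2).lapMatrix ℂ).mulVec x (Sum.inr i) =
      3 * x (Sum.inr i) - (x (Sum.inr (i + 2)) + x (Sum.inr (i - 2)) + x (Sum.inl i)) := by
  have h2 : (4 : ZMod n) ≠ 0 := by
    exact_mod_cast zmod_natCast_ne_zero (n := n) (m := 4) (by omega) (by omega)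
  have h : i + 2 ≠ i - 2 := by
    intro e
    apply h2
    linear_combination e
  rw [SimpleGraph.lapMatrix_mulVec_apply, ← SimpleGraph.card_neighborFinset_eq_degree,
    gp_neighborFinset_inr hn, Finset.sum_insert (by simp [h]), Finset.sum_insert (by simp),
    Finset.sum_singleton, Finset.card_insert_of_notMem (by simp [h]),
    Finset.card_insert_of_notMem (by simp), Finset.card_singleton]
  push_cast
  ring

lemma det_fromBlocks_diag {m : Type*} [Fintype m] [DecidableEq m] (a b c d : m → ℂ) :
    (Matrix.fromBlocks (Matrix.diagonal a) (Matrix.diagonal b) (Matrix.diagonal c)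
      (Matrix.diagonal d)).det = ∏ j, (a j * d j - b j * c j) := by
  let e : m ⊕ m ≃ Fin 2 × m :=
    (Equiv.boolProdEquivSum m).symm.trans (finTwoEquiv.symm.prodCongr (Equiv.refl m))
  have h : Matrix.fromBlocks (Matrix.diagonal a) (Matrix.diagonal b) (Matrix.diagonal c)
      (Matrix.diagonal d) =
      (Matrix.blockDiagonal fun k => !![a k, b k; c k, d k]).submatrix e e := by
    ext i j
    rcases i with i | i <;> rcases j with j | j <;>
      by_cases hij : i = j <;>
      simp [e, Matrix.blockDiagonal_apply, Matrix.diagonal_apply, hij, finTwoEquiv]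
  rw [h, Matrix.det_submatrix_equiv_self, Matrix.det_blockDiagonal]
  simp [Matrix.det_fin_two_of]

/-- The Fourier matrix on `ZMod n`. -/
noncomputable def fourierMat (n : ℕ) [NeZero n] : Matrix (ZMod n) (ZMod n) ℂ :=
  Matrix.of fun i j => ZMod.stdAddChar (i * j)

lemma sum_stdAddChar {n : ℕ} [NeZero n] (j : ZMod n) :
    ∑ i : ZMod n, (ZMod.stdAddChar (i * j) : ℂ) = if j = 0 then (n : ℂ) else 0 := by
  rw [AddChar.sum_mulShift j (ZMod.isPrimitive_stdAddChar n), ZMod.card]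
  split_ifs <;> simp

lemma det_fourierMat_ne_zero (n : ℕ) [NeZero n] : (fourierMat n).det ≠ 0 := by
  have h : fourierMat n * (Matrix.of fun i j => (ZMod.stdAddChar (-(i * j)) : ℂ)) =
      (n : ℂ) • 1 := by
    ext i k
    simp only [Matrix.mul_apply, fourierMat, Matrix.of_apply, ← AddChar.map_add_eq_mul]
    have : ∀ j : ZMod n, i * j + -(j * k) = j * (i - k) := by intro j; ring
    simp only [this, sum_stdAddChar, sub_eq_zero, Matrix.smul_apply, Matrix.one_apply]
    split_ifs <;> simp
  have h2 := congrArg Matrix.det h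
  rw [Matrix.det_mul, Matrix.det_smul, Matrix.det_one, mul_one] at h2
  intro h0
  rw [h0, zero_mul] at h2
  exact pow_ne_zero _ (Nat.cast_ne_zero.mpr (NeZero.ne n)) h2.symm

/-- Eigenvalue data. -/
noncomputable def gpA {n : ℕ} [NeZero n] (j : ZMod n) : ℂ :=
  ZMod.stdAddChar j + ZMod.stdAddChar (-j)

/-- Contribution of the all-ones matrix. -/
noncomputable def gpE {n : ℕ} (j : ZMod n) : ℂ := if j = 0 then (n : ℂ) else 0

open scoped Classical in
lemma gp_fourier {n : ℕ} [NeZero n] (hn : 5 ≤ n) :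
    ((genPetersen n 2).lapMatrix ℂ + Matrix.of fun _ _ => (1 : ℂ)) *
      Matrix.fromBlocks (fourierMat n) 0 0 (fourierMat n) =
    Matrix.fromBlocks (fourierMat n) 0 0 (fourierMat n) *
      Matrix.fromBlocks (Matrix.diagonal fun j => 3 - gpA j + gpE j)
        (Matrix.diagonal fun j => -1 + gpE j) (Matrix.diagonal fun j => -1 + gpE j)
        (Matrix.diagonal fun j => 3 - (gpA j ^ 2 - 2) + gpE j) := by
  rw [Matrix.fromBlocks_multiply, Matrix.add_mul]
  have key : ∀ (M : Matrix (ZMod n ⊕ ZMod n) (ZMod n ⊕ ZMod n) ℂ) a b,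
      ((genPetersen n 2).lapMatrix ℂ * M) a b =
        ((genPetersen n 2).lapMatrix ℂ).mulVec (fun c => M c b) a := by
    intro M a b
    rfl
  have keyJ : ∀ (M : Matrix (ZMod n ⊕ ZMod n) (ZMod n ⊕ ZMod n) ℂ) a b,
      ((Matrix.of fun _ _ => (1 : ℂ)) * M : Matrix (ZMod n ⊕ ZMod n) (ZMod n ⊕ ZMod n) ℂ) a b =
        ∑ c, M c b := by
    intro M a b
    simp [Matrix.mul_apply]
  have hE0 : ∀ i j : ZMod n, gpE j = (ZMod.stdAddChar (i * j) : ℂ) * gpE j := by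
    intro i j
    unfold gpE
    split_ifs with h
    · simp [h]
    · simp
  have hsum : ∀ j : ZMod n, ∑ i : ZMod n, (ZMod.stdAddChar (i * j) : ℂ) = gpE j := sum_stdAddChar
  have hinv : ∀ j : ZMod n, (ZMod.stdAddChar j : ℂ) * ZMod.stdAddChar (-j) = 1 := by
    intro j
    rw [← AddChar.map_add_eq_mul]
    simp
  have e1 : ∀ i j : ZMod n, (ZMod.stdAddChar ((i + 1) * j) : ℂ) =
      ZMod.stdAddChar (i * j) * ZMod.stdAddChar j := by
    intro i j
    rw [← AddChar.map_add_eq_mul]; congr 1; ring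
  have e2 : ∀ i j : ZMod n, (ZMod.stdAddChar ((i - 1) * j) : ℂ) =
      ZMod.stdAddChar (i * j) * ZMod.stdAddChar (-j) := by
    intro i j
    rw [← AddChar.map_add_eq_mul]; congr 1; ring
  have e3 : ∀ i j : ZMod n, (ZMod.stdAddChar ((i + 2) * j) : ℂ) =
      ZMod.stdAddChar (i * j) * ZMod.stdAddChar j * ZMod.stdAddChar j := by
    intro i j
    rw [← AddChar.map_add_eq_mul, ← AddChar.map_add_eq_mul]; congr 1; ring
  have e4 : ∀ i j : ZMod n, (ZMod.stdAddChar ((i - 2) * j) : ℂ) =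
      ZMod.stdAddChar (i * j) * ZMod.stdAddChar (-j) * ZMod.stdAddChar (-j) := by
    intro i j
    rw [← AddChar.map_add_eq_mul, ← AddChar.map_add_eq_mul]; congr 1; ring
  ext a b
  rw [Matrix.add_apply, key, keyJ, Fintype.sum_sum_type]
  rcases a with i | i <;> rcases b with j | j
  · rw [gp_lap_inl hn]
    simp only [Matrix.fromBlocks_apply₁₁, Matrix.fromBlocks_apply₂₁, Matrix.zero_apply,
      Matrix.zero_mul, add_zero, Matrix.mul_diagonal, Finset.sum_const_zero]
    simp only [fourierMat, Matrix.of_apply, hsum, e1, e2, gpA]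
    linear_combination hE0 i j
  · rw [gp_lap_inl hn]
    simp only [Matrix.fromBlocks_apply₁₂, Matrix.fromBlocks_apply₂₂, Matrix.zero_apply,
      Matrix.zero_mul, add_zero, zero_add, Matrix.mul_diagonal, Finset.sum_const_zero]
    simp only [fourierMat, Matrix.of_apply, hsum, e1, e2, gpA]
    linear_combination hE0 i j
  · rw [gp_lap_inr hn]
    simp only [Matrix.fromBlocks_apply₁₁, Matrix.fromBlocks_apply₂₁, Matrix.zero_apply,
      Matrix.zero_mul, add_zero, zero_add, Matrix.mul_diagonal, Finset.sum_const_zero]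
    simp only [fourierMat, Matrix.of_apply, hsum, e1, e2, gpA]
    linear_combination hE0 i j
  · rw [gp_lap_inr hn]
    simp only [Matrix.fromBlocks_apply₁₂, Matrix.fromBlocks_apply₂₂, Matrix.zero_apply,
      Matrix.zero_mul, add_zero, zero_add, Matrix.mul_diagonal, Finset.sum_const_zero]
    simp only [fourierMat, Matrix.of_apply, hsum, e3, e4, gpA]
    linear_combination hE0 i j + 2 * (ZMod.stdAddChar (i * j) : ℂ) * hinv j

lemma gp_trees_prod {n : ℕ} [NeZero n] (hn : 5 ≤ n) :
    (n : ℂ) * numSpanningTrees (genPetersen n 2) =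
      ∏ j ∈ (Finset.univ : Finset (ZMod n)).erase 0,
        ((gpA j - 2) * (gpA j ^ 2 - gpA j - 7)) := by
  classical
  have hn0 : (n : ℂ) ≠ 0 := Nat.cast_ne_zero.mpr (NeZero.ne n)
  have hrow : ∀ i, ∑ j, (genPetersen n 2).lapMatrix ℂ i j = 0 := by
    intro i
    have := congrFun ((genPetersen n 2).lapMatrix_mulVec_const_eq_zero (R := ℂ)) i
    simpa [Matrix.mulVec, dotProduct] using this
  have hcol : ∀ j, ∑ i, (genPetersen n 2).lapMatrix ℂ i j = 0 := by
    intro j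
    rw [← hrow j]
    refine Finset.sum_congr rfl fun i _ => ?_
    exact ((genPetersen n 2).isSymm_lapMatrix (R := ℂ)).apply j i
  have h1 := det_add_ones _ (Sum.inl 0) hrow hcol
  rw [matrix_tree'] at h1
  have h2 := congrArg Matrix.det (gp_fourier hn)
  rw [Matrix.det_mul, Matrix.det_mul, mul_comm, Matrix.det_fromBlocks_zero₂₁] at h2
  have h3 := mul_left_cancel₀ (mul_ne_zero (det_fourierMat_ne_zero n) (det_fourierMat_ne_zero n)) h2
  rw [det_fromBlocks_diag, h1, ← Finset.mul_prod_erase _ _ (Finset.mem_univ (0 : ZMod n))] at h3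
  have h4 : ∏ j ∈ (Finset.univ : Finset (ZMod n)).erase 0,
      ((3 - gpA j + gpE j) * (3 - (gpA j ^ 2 - 2) + gpE j) - (-1 + gpE j) * (-1 + gpE j)) =
      ∏ j ∈ (Finset.univ : Finset (ZMod n)).erase 0,
        ((gpA j - 2) * (gpA j ^ 2 - gpA j - 7)) := by
    refine Finset.prod_congr rfl fun j hj => ?_
    have : gpE j = 0 := if_neg (Finset.ne_of_mem_erase hj)
    rw [this]
    ring
  rw [h4] at h3
  have hA0 : gpA (0 : ZMod n) = 2 := by
    simp [gpA]; norm_num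
  have hE0 : gpE (0 : ZMod n) = n := if_pos rfl
  rw [hA0, hE0, Fintype.card_sum, ZMod.card] at h3
  push_cast at h3
  apply mul_left_cancel₀ (mul_ne_zero (by norm_num : (4 : ℂ) ≠ 0) hn0)
  linear_combination h3

lemma prod_X_sub_stdAddChar {n : ℕ} [NeZero n] :
    ∏ j : ZMod n, (X - C (ZMod.stdAddChar j : ℂ)) = X ^ n - 1 := by
  have hpos : 0 < n := Nat.pos_of_ne_zero (NeZero.ne n)
  have hprim := Complex.isPrimitiveRoot_exp n (NeZero.ne n)
  rw [X_pow_sub_one_eq_prod hpos hprim]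
  have himg : (Finset.univ : Finset (ZMod n)).image (fun j => (ZMod.stdAddChar j : ℂ)) =
      nthRootsFinset n (1 : ℂ) := by
    apply Finset.eq_of_subset_of_card_le
    · intro z hz
      obtain ⟨j, -, rfl⟩ := Finset.mem_image.mp hz
      rw [mem_nthRootsFinset hpos, ← AddChar.map_nsmul_eq_pow]
      simp
    · rw [hprim.card_nthRootsFinset, Finset.card_image_of_injective _ ZMod.injective_stdAddChar,
        Finset.card_univ, ZMod.card]
  rw [← himg, Finset.prod_image (fun a _ b _ h => ZMod.injective_stdAddChar h)]

lemma prod_sub_stdAddChar {n : ℕ} [NeZero n] (z : ℂ) :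
    ∏ j : ZMod n, (z - ZMod.stdAddChar j) = z ^ n - 1 := by
  have := congrArg (Polynomial.eval z) (prod_X_sub_stdAddChar (n := n))
  simpa [Polynomial.eval_prod] using this

lemma prod_one_sub_stdAddChar {n : ℕ} [NeZero n] :
    ∏ j ∈ (Finset.univ : Finset (ZMod n)).erase 0, (1 - (ZMod.stdAddChar j : ℂ)) = n := by
  have h := prod_X_sub_stdAddChar (n := n)
  rw [← Finset.mul_prod_erase _ _ (Finset.mem_univ (0 : ZMod n))] at h
  have h2 : (X - C (ZMod.stdAddChar (0 : ZMod n) : ℂ)) = X - 1 := by simp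
  rw [h2, ← mul_geom_sum] at h
  have h3 := mul_left_cancel₀ (by simpa using X_sub_C_ne_zero (1 : ℂ)) h
  have := congrArg (Polynomial.eval 1) h3
  simpa [Polynomial.eval_prod, Polynomial.eval_finsetSum] using this

lemma stdAddChar_mul_neg {n : ℕ} [NeZero n] (j : ZMod n) :
    (ZMod.stdAddChar j : ℂ) * ZMod.stdAddChar (-j) = 1 := by
  rw [← AddChar.map_add_eq_mul]
  simp

lemma prod_gpA_sub_two {n : ℕ} [NeZero n] :
    ∏ j ∈ (Finset.univ : Finset (ZMod n)).erase 0, (gpA j - 2) =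
      (-1) ^ (n - 1) * (n : ℂ) ^ 2 := by
  have h1 : ∀ j : ZMod n, gpA j - 2 =
      (-1) * ((1 - (ZMod.stdAddChar j : ℂ)) * (1 - (ZMod.stdAddChar (-j) : ℂ))) := by
    intro j
    unfold gpA
    linear_combination (1 : ℂ) * stdAddChar_mul_neg j
  have h2 : ∏ j ∈ (Finset.univ : Finset (ZMod n)).erase 0, (1 - (ZMod.stdAddChar (-j) : ℂ)) =
      n := by
    rw [← prod_one_sub_stdAddChar (n := n)]
    refine Finset.prod_nbij' (fun j => -j) (fun j => -j) ?_ ?_ ?_ ?_ ?_ <;> simp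
  simp only [h1, Finset.prod_mul_distrib, prod_one_sub_stdAddChar, h2, Finset.prod_const]
  rw [Finset.card_erase_of_mem (Finset.mem_univ _), Finset.card_univ, ZMod.card]
  ring

lemma prod_sub_gpA {n : ℕ} [NeZero n] (x : ℂ) :
    ∏ j : ZMod n, (2 * x - gpA j) = 2 * ((Chebyshev.T ℂ n).eval x - 1) := by
  obtain ⟨θ, rfl⟩ := Complex.cos_surjective x
  rw [Chebyshev.T_complex_cos]
  set z := Complex.exp (θ * Complex.I) with hz
  have hz0 : z ≠ 0 := Complex.exp_ne_zero _
  have hz' : Complex.exp (-θ * Complex.I) = z⁻¹ := by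
    rw [hz, ← Complex.exp_neg, neg_mul]
  have hcos : 2 * Complex.cos θ = z + z⁻¹ := by
    rw [Complex.two_cos, hz']
  have hcosn : 2 * Complex.cos (((n : ℤ) : ℂ) * θ) = z ^ n + (z ^ n)⁻¹ := by
    rw [Complex.two_cos, hz, ← Complex.exp_nat_mul, ← Complex.exp_neg]
    congr 2 <;> push_cast <;> ring
  have h1 : ∀ j : ZMod n, 2 * Complex.cos θ - gpA j =
      z⁻¹ * ((z - ZMod.stdAddChar j) * (z - ZMod.stdAddChar (-j))) := by
    intro j
    rw [hcos]
    unfold gpA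
    field_simp
    linear_combination (-1 : ℂ) * stdAddChar_mul_neg j
  have h2 : ∏ j : ZMod n, (z - ZMod.stdAddChar (-j)) = z ^ n - 1 := by
    rw [← prod_sub_stdAddChar]
    exact Fintype.prod_equiv (Equiv.neg _) _ _ (fun j => rfl)
  simp only [h1, Finset.prod_mul_distrib, prod_sub_stdAddChar, h2, Finset.prod_const]
  rw [Finset.card_univ, ZMod.card, mul_sub 2, hcosn]
  have hzn : z ^ n ≠ 0 := pow_ne_zero _ hz0
  rw [inv_pow]
  field_simp
  ring

lemma cheb_conj (s : ℝ) (hs : s ^ 2 = 29) (n : ℕ) : ∃ p q : ℚ,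
    (Chebyshev.T ℝ n).eval ((1 + s) / 4) = p + q * s ∧
    (Chebyshev.T ℝ n).eval ((1 - s) / 4) = p - q * s := by
  have h : ∀ n : ℕ, (∃ p q : ℚ, (Chebyshev.T ℝ n).eval ((1 + s) / 4) = p + q * s ∧
      (Chebyshev.T ℝ n).eval ((1 - s) / 4) = p - q * s) ∧
      (∃ p q : ℚ, (Chebyshev.T ℝ ((n : ℤ) + 1)).eval ((1 + s) / 4) = p + q * s ∧
      (Chebyshev.T ℝ ((n : ℤ) + 1)).eval ((1 - s) / 4) = p - q * s) := by
    intro n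
    induction n with
    | zero =>
      refine ⟨⟨1, 0, by simp, by simp⟩, ⟨1 / 4, 1 / 4, ?_, ?_⟩⟩
      · simp; ring
      · simp; ring
    | succ n ih =>
      obtain ⟨⟨p, q, h1, h2⟩, ⟨p', q', h3, h4⟩⟩ := ih
      refine ⟨⟨p', q', by push_cast; exact h3, by push_cast; exact h4⟩,
        ⟨(p' + 29 * q') / 2 - p, (p' + q') / 2 - q, ?_, ?_⟩⟩
      · have : ((n + 1 : ℕ) : ℤ) + 1 = (n : ℤ) + 2 := by push_cast; ring
        rw [this, Chebyshev.T_add_two]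
        simp only [eval_sub, eval_mul, eval_X, eval_ofNat, h1, h3]
        push_cast
        linear_combination (q' / 2 : ℝ) * hs
      · have : ((n + 1 : ℕ) : ℤ) + 1 = (n : ℤ) + 2 := by push_cast; ring
        rw [this, Chebyshev.T_add_two]
        simp only [eval_sub, eval_mul, eval_X, eval_ofNat, h2, h4]
        push_cast
        linear_combination (q' / 2 : ℝ) * hs
  exact (h n).1

lemma irr_unique (s : ℝ) (hs : Irrational s) (a b : ℚ) (h : (a : ℝ) + b * s = 0) :
    a = 0 ∧ b = 0 := by
  have hb : b = 0 := by
    by_contra hb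
    apply hs
    refine ⟨-a / b, ?_⟩
    have : (b : ℝ) ≠ 0 := by exact_mod_cast hb
    push_cast
    field_simp
    linear_combination -h
  subst hb
  refine ⟨?_, rfl⟩
  have : (a : ℝ) = 0 := by simpa using h
  exact_mod_cast this

/-- If `α, β ∈ ℤ` satisfy `T_n((1 + √29)/4) − 1 = (α + β√29)/4`, then
`20·τ(GP(n,2)) = (−1)^n · n · (α² − 29β²)`. -/
theorem spanning_trees_GP2_alpha_beta (n : ℕ) (hn : 5 ≤ n) (α β : ℤ)
    (hαβ : (Polynomial.Chebyshev.T ℝ n).eval ((1 + Real.sqrt 29) / 4) - 1 =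
      (α + β * Real.sqrt 29) / 4) :
    (20 * numSpanningTrees (genPetersen n 2) : ℤ) =
      (-1) ^ n * n * (α ^ 2 - 29 * β ^ 2) := by
  have : NeZero n := ⟨by omega⟩
  have hn0 : (n : ℂ) ≠ 0 := Nat.cast_ne_zero.mpr (NeZero.ne n)
  have hs2 : (Real.sqrt 29) ^ 2 = 29 := Real.sq_sqrt (by norm_num)
  have hirr : Irrational (Real.sqrt 29) := by
    have := Nat.Prime.irrational_sqrt (p := 29) (by norm_num)
    exact_mod_cast this
  set s := Real.sqrt 29 with hs
  obtain ⟨p, q, h1, h2⟩ := cheb_conj s hs2 n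
  obtain ⟨hp, hq⟩ := irr_unique s hirr (p - 1 - α / 4) (q - β / 4) (by
    push_cast
    linear_combination hαβ - h1)
  have hp' : (p : ℝ) = 1 + α / 4 := by
    have : p = 1 + α / 4 := by linear_combination hp
    rw [this]; push_cast; ring
  have hq' : (q : ℝ) = β / 4 := by
    have : q = β / 4 := by linear_combination hq
    rw [this]; push_cast; ring
  have hconj : (Chebyshev.T ℝ n).eval ((1 - s) / 4) - 1 = (α - β * s) / 4 := by
    rw [h2, hp', hq']; ring
  have hP : (2 * ((Chebyshev.T ℝ n).eval ((1 + s) / 4) - 1)) *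
      (2 * ((Chebyshev.T ℝ n).eval ((1 - s) / 4) - 1)) = ((α : ℝ) ^ 2 - 29 * β ^ 2) / 4 := by
    rw [hαβ, hconj]
    linear_combination (-(β : ℝ) ^ 2 / 4) * hs2
  have hPc := congrArg (fun x : ℝ => (x : ℂ)) hP
  simp only [Complex.ofReal_mul, Complex.ofReal_sub, Chebyshev.complex_ofReal_eval_T,
    Complex.ofReal_one, Complex.ofReal_ofNat] at hPc
  rw [← prod_sub_gpA, ← prod_sub_gpA, ← Finset.prod_mul_distrib] at hPc
  have hs2c : (s : ℂ) ^ 2 = 29 := by exact_mod_cast hs2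
  have hfac : ∀ j : ZMod n, (2 * (((1 + s) / 4 : ℝ) : ℂ) - gpA j) *
      (2 * (((1 - s) / 4 : ℝ) : ℂ) - gpA j) = gpA j ^ 2 - gpA j - 7 := by
    intro j
    push_cast
    linear_combination (-1 / 4 : ℂ) * hs2c
  simp only [hfac] at hPc
  rw [← Finset.mul_prod_erase _ _ (Finset.mem_univ (0 : ZMod n))] at hPc
  have hA0 : gpA (0 : ZMod n) = 2 := by
    simp [gpA]; norm_num
  rw [hA0] at hPc
  have hmain := gp_trees_prod (n := n) hn
  rw [Finset.prod_mul_distrib, prod_gpA_sub_two] at hmain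
  have hsign : (-1 : ℂ) ^ n = -(-1) ^ (n - 1) := by
    obtain ⟨m, rfl⟩ : ∃ m, n = m + 1 := ⟨n - 1, by omega⟩
    rw [Nat.add_sub_cancel, pow_succ]; ring
  have hfinal : (20 * numSpanningTrees (genPetersen n 2) : ℂ) =
      (-1) ^ n * n * ((α : ℂ) ^ 2 - 29 * (β : ℂ) ^ 2) := by
    apply mul_left_cancel₀ hn0
    rw [hsign]
    push_cast at hPc
    linear_combination 20 * hmain - 4 * (-1) ^ (n - 1) * (n : ℂ) ^ 2 * hPc
  exact_mod_cast hfinal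
end
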